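/- arXiv:2002.01178 — 2 statements merged into one kernel-verified Lean document; each statement's English description precedes it below -/
import Mathlib

section
/- Let x be a condensed binary string of length ℓ and let x' be the condensed string of length ℓ + 2 obtained from x by appending the two symbols 1 − x[ℓ] and x[ℓ]. Then for every binary string s with |s̃| > ℓ + 2 it holds that dtw(x', s)² ≤ dtw(x, s)² − 1. -/
/-- One step of a warping path: move down, right, or diagonally. -/
def wpStep (a b : ℕ × ℕ) : Prop :=
  (b.1 = a.1 + 1 ∧ b.2 = a.2) ∨ (b.1 = a.1 ∧ b.2 = a.2 + 1) ∨
    (b.1 = a.1 + 1 ∧ b.2 = a.2 + 1)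

/-- A warping path of order `m × n` (0-based indices). -/
def IsWarpingPath (m n : ℕ) (p : List (ℕ × ℕ)) : Prop :=
  p.head? = some (0, 0) ∧ p.getLast? = some (m - 1, n - 1) ∧
    List.Chain' wpStep p ∧ ∀ q ∈ p, q.1 < m ∧ q.2 < n

/-- The cost of aligning binary strings `x` and `y` along path `p`:
the number of aligned mismatching pairs (for binary symbols,
`(x[i] - y[j])^2` is `0` if the symbols agree and `1` otherwise). -/
def pathCost (x y : List Bool) (p : List (ℕ × ℕ)) : ℕ :=
  (p.map fun q => if x.getD q.1 false = y.getD q.2 false then 0 else 1).sum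

/-- The squared dynamic time warping distance `dtw(x,y)²` of two binary strings. -/
noncomputable def dtwSq (x y : List Bool) : ℕ :=
  sInf {c | ∃ p, IsWarpingPath x.length y.length p ∧ pathCost x y p = c}

/-- The dynamic time warping distance `dtw(x,y)`. -/
noncomputable def dtw (x y : List Bool) : ℝ :=
  Real.sqrt (dtwSq x y)

/-- The condensation of a binary string: collapse every maximal run of equal
consecutive symbols to a single symbol. -/
def condense : List Bool → List Bool
  | [] => []
  | [a] => [a]
  | a :: b :: rest => if a = b then condense (b :: rest) else a :: condense (b :: rest)

/-- Auxiliary function collecting the block sizes of a binary string. -/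
def blockSizesAux : Bool → ℕ → List Bool → List ℕ
  | _, cnt, [] => [cnt]
  | cur, cnt, a :: rest =>
      if a = cur then blockSizesAux cur (cnt + 1) rest
      else cnt :: blockSizesAux a 1 rest

/-- The list of block sizes of a binary string (sizes of the maximal runs
of equal consecutive symbols, from left to right). -/
def blockSizes : List Bool → List ℕ
  | [] => []
  | a :: rest => blockSizesAux a 1 rest

/-- The objective `F(z) = Σᵢ dtw(sᵢ, z)²`. -/
noncomputable def Fobj (ss : List (List Bool)) (z : List Bool) : ℕ :=
  (ss.map fun s => dtwSq s z).sum

/-- `z` is a mean of the strings `ss`: a nonempty binary string minimizing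
`F` among all nonempty binary strings. -/
def IsMean (ss : List (List Bool)) (z : List Bool) : Prop :=
  z ≠ [] ∧ ∀ w : List Bool, w ≠ [] → Fobj ss z ≤ Fobj ss w

/-- The optimal value of a Min 1-Separated Sum instance with integers `b`
(1-based indexing) and selection size `r`: minimize the sum of `r` selected
integers, no two of which are consecutive. -/
noncomputable def mssValue (b : List ℕ) (r : ℕ) : ℕ :=
  sInf {s | ∃ I : List ℕ, I.length = r ∧ (∀ i ∈ I, 1 ≤ i ∧ i ≤ b.length) ∧
    List.Chain' (fun a c => a + 2 ≤ c) I ∧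
    (I.map fun i => b.getD (i - 1) 0).sum = s}

/-!
An alignment of `x` with `s` reads both strings from the left, so it can be described by recursion
on the two strings. For a condensed binary string `x` with first symbol `a`, appending
`1 - x[ℓ], x[ℓ]` gives the same string as prepending `a, 1 - a`; hence the two extra symbols may be
inserted wherever the alignment profits from them. As `s` has many more blocks than `x`, the
alignment at some point matches `a` with `a` and afterwards aligns the suffix `a :: y` of `x` with
a suffix `(1 - a) :: t` of `s`. There it may pass on from `a` to `y` at once, or else it pays for
a match of `a` with `1 - a` just before the next `a` of `s`, and an inserted `1 - a, a` saves this
unit.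
-/

/-- The cost `(a - b)²` of aligning two binary symbols. -/
def mismatch (a b : Bool) : ℕ := if a = b then 0 else 1

/-- `Aligns x s c` says that some warping path between `x` and `s` has cost `c`. The path is encoded
by its sequence of steps: each constructor matches the two first symbols and then removes the first
symbol of `x` (`down`), of `s` (`right`), or of both (`diag`). -/
inductive Aligns : List Bool → List Bool → ℕ → Prop
  | base (a b : Bool) : Aligns [a] [b] (mismatch a b)
  | down (a b : Bool) {x s : List Bool} {c : ℕ} :
      Aligns x (b :: s) c → Aligns (a :: x) (b :: s) (mismatch a b + c)
  | right (a b : Bool) {x s : List Bool} {c : ℕ} :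
      Aligns (a :: x) s c → Aligns (a :: x) (b :: s) (mismatch a b + c)
  | diag (a b : Bool) {x s : List Bool} {c : ℕ} :
      Aligns x s c → Aligns (a :: x) (b :: s) (mismatch a b + c)

/-- The string obtained from `x` by appending the two symbols `1 - x[ℓ]` and `x[ℓ]`, where `x[ℓ]` is
the last symbol of `x`; on the empty string `x[ℓ]` is read as `0`. -/
def extend (x : List Bool) : List Bool := x ++ [!x.getLastD false, x.getLastD false]

section WarpingPath

variable {x s : List Bool} {c : ℕ}

theorem pathCost_cons (x s : List Bool) (q : ℕ × ℕ) (p : List (ℕ × ℕ)) :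
    pathCost x s (q :: p) =
      mismatch (x.getD q.1 false) (s.getD q.2 false) + pathCost x s p := by
  simp only [pathCost, mismatch, List.map_cons, List.sum_cons]

theorem pathCost_map_add (x s : List Bool) (d : ℕ × ℕ) (p : List (ℕ × ℕ)) :
    pathCost x s (p.map (d + ·)) = pathCost (x.drop d.1) (s.drop d.2) p := by
  simp [pathCost, Function.comp_def, List.getD_eq_getElem?_getD]

theorem IsWarpingPath.cons_map_add {m n : ℕ} {p : List (ℕ × ℕ)} {d : ℕ × ℕ}
    (hp : IsWarpingPath m n p) (hd : wpStep (0, 0) d) :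
    IsWarpingPath (d.1 + m) (d.2 + n) ((0, 0) :: p.map (d + ·)) := by
  obtain ⟨hhead, hlast, hchain, hbound⟩ := hp
  obtain ⟨q, rfl⟩ := List.head?_eq_some_iff.mp hhead
  obtain ⟨hm, hn⟩ : 0 < m ∧ 0 < n := hbound (0, 0) (by simp)
  refine ⟨rfl, ?_, ?_, ?_⟩
  · rw [List.map_cons, List.getLast?_cons_cons, ← List.map_cons, List.getLast?_map, hlast]
    simp only [Option.map_some, Option.some.injEq, Prod.ext_iff, Prod.fst_add, Prod.snd_add]
    omega
  · refine List.isChain_cons_cons.mpr ⟨hd, ?_⟩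
    refine List.isChain_map_of_isChain (d + ·) (fun a b hab => ?_) hchain
    simp only [wpStep, Prod.fst_add, Prod.snd_add] at hab ⊢
    omega
  · intro r hr
    rcases List.mem_cons.mp hr with rfl | hr
    · exact ⟨Nat.add_pos_right _ hm, Nat.add_pos_right _ hn⟩
    · obtain ⟨r', hr', rfl⟩ := List.mem_map.mp hr
      simpa only [Prod.fst_add, Prod.snd_add, add_lt_add_iff_left] using hbound r' hr'

theorem exists_isWarpingPath_of_drop {d : ℕ × ℕ} (hd : wpStep (0, 0) d)
    (hx : d.1 ≤ x.length) (hs : d.2 ≤ s.length)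
    (h : ∃ p, IsWarpingPath (x.drop d.1).length (s.drop d.2).length p ∧
      pathCost (x.drop d.1) (s.drop d.2) p = c) :
    ∃ p, IsWarpingPath x.length s.length p ∧
      pathCost x s p = mismatch (x.getD 0 false) (s.getD 0 false) + c := by
  obtain ⟨p, hp, rfl⟩ := h
  have hp' := hp.cons_map_add hd
  rw [List.length_drop, List.length_drop, Nat.add_sub_cancel' hx, Nat.add_sub_cancel' hs] at hp'
  exact ⟨_, hp', by rw [pathCost_cons, pathCost_map_add]⟩

theorem Aligns.exists_isWarpingPath (h : Aligns x s c) :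
    ∃ p, IsWarpingPath x.length s.length p ∧ pathCost x s p = c := by
  induction h with
  | base a b =>
    exact ⟨[(0, 0)], ⟨rfl, rfl, List.isChain_singleton _, by simp⟩, by simp [pathCost, mismatch]⟩
  | down a b _ ih =>
    exact exists_isWarpingPath_of_drop (d := (1, 0)) (by simp [wpStep]) (by simp) (by simp) ih
  | right a b _ ih =>
    exact exists_isWarpingPath_of_drop (d := (0, 1)) (by simp [wpStep]) (by simp) (by simp) ih
  | diag a b _ ih =>
    exact exists_isWarpingPath_of_drop (d := (1, 1)) (by simp [wpStep]) (by simp) (by simp) ih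

theorem Aligns.of_isChain {q : ℕ × ℕ} {p : List (ℕ × ℕ)}
    (hchain : List.IsChain wpStep (q :: p))
    (hlast : (q :: p).getLast? = some (x.length - 1, s.length - 1))
    (hbound : ∀ r ∈ q :: p, r.1 < x.length ∧ r.2 < s.length) :
    Aligns (x.drop q.1) (s.drop q.2) (pathCost x s (q :: p)) := by
  induction p generalizing q with
  | nil =>
    obtain ⟨hi, hj⟩ := hbound q (by simp)
    obtain rfl : q = (x.length - 1, s.length - 1) := by simpa using hlast
    rw [List.drop_eq_getElem_cons hi, List.drop_eq_getElem_cons hj,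
      List.drop_of_length_le (Nat.le_add_of_sub_le le_rfl),
      List.drop_of_length_le (Nat.le_add_of_sub_le le_rfl), pathCost_cons,
      List.getD_eq_getElem _ _ hi, List.getD_eq_getElem _ _ hj]
    exact .base _ _
  | cons r p ih =>
    obtain ⟨hi, hj⟩ := hbound q (by simp)
    obtain ⟨hstep, hchain⟩ := List.isChain_cons_cons.mp hchain
    have hrest := ih hchain (by simpa using hlast) fun r' hr' => hbound r' (.tail _ hr')
    rw [pathCost_cons, List.getD_eq_getElem _ _ hi, List.getD_eq_getElem _ _ hj,
      List.drop_eq_getElem_cons hi, List.drop_eq_getElem_cons hj]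
    rcases hstep with ⟨h₁, h₂⟩ | ⟨h₁, h₂⟩ | ⟨h₁, h₂⟩ <;> rw [h₁, h₂] at hrest
    · exact .down _ _ (List.drop_eq_getElem_cons hj ▸ hrest)
    · exact .right _ _ (List.drop_eq_getElem_cons hi ▸ hrest)
    · exact .diag _ _ hrest

theorem aligns_iff_exists_isWarpingPath :
    Aligns x s c ↔ ∃ p, IsWarpingPath x.length s.length p ∧ pathCost x s p = c := by
  refine ⟨Aligns.exists_isWarpingPath, ?_⟩
  rintro ⟨p, ⟨hhead, hlast, hchain, hbound⟩, rfl⟩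
  obtain ⟨q, rfl⟩ := List.head?_eq_some_iff.mp hhead
  exact Aligns.of_isChain hchain hlast hbound

theorem exists_aligns (hx : x ≠ []) (hs : s ≠ []) : ∃ c, Aligns x s c := by
  obtain ⟨a, x, rfl⟩ := List.exists_cons_of_ne_nil hx
  obtain ⟨b, s, rfl⟩ := List.exists_cons_of_ne_nil hs
  induction x generalizing a with
  | nil =>
    induction s generalizing b with
    | nil => exact ⟨_, .base a b⟩
    | cons b' s ih => exact (ih b' (by simp)).imp' _ fun _ h => .right a b h
  | cons a' x ih => exact (ih a' (by simp)).imp' _ fun _ h => .down a b h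

theorem dtwSq_eq_sInf_aligns (x s : List Bool) : dtwSq x s = sInf {c | Aligns x s c} := by
  simp only [dtwSq, aligns_iff_exists_isWarpingPath]

theorem Aligns.dtwSq_le (h : Aligns x s c) : dtwSq x s ≤ c :=
  dtwSq_eq_sInf_aligns x s ▸ Nat.sInf_le h

theorem aligns_dtwSq (hx : x ≠ []) (hs : s ≠ []) : Aligns x s (dtwSq x s) :=
  dtwSq_eq_sInf_aligns x s ▸ Nat.sInf_mem (exists_aligns hx hs)

end WarpingPath

section Condense

theorem condense_cons_self (a : Bool) (t : List Bool) :
    condense (a :: a :: t) = condense (a :: t) := by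
  rw [condense, if_pos rfl]

theorem condense_cons_cons_of_ne {a b : Bool} (hab : a ≠ b) (t : List Bool) :
    condense (a :: b :: t) = a :: condense (b :: t) := by
  rw [condense, if_neg hab]

theorem length_condense_le_length_condense_cons (a : Bool) (t : List Bool) :
    (condense t).length ≤ (condense (a :: t)).length := by
  cases t with
  | nil => simp [condense]
  | cons b t => rw [condense]; split <;> simp

theorem length_condense_cons_le (a : Bool) (t : List Bool) :
    (condense (a :: t)).length ≤ (condense t).length + 1 := by
  cases t with
  | nil => simp [condense]
  | cons b t => rw [condense]; split <;> simp

theorem length_condense_cons_le_length_condense_cons_add_one (a b : Bool) (t : List Bool) :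
    (condense (a :: t)).length ≤ (condense (b :: t)).length + 1 :=
  (length_condense_cons_le a t).trans
    (Nat.add_le_add_right (length_condense_le_length_condense_cons b t) 1)

theorem length_condense_not_cons_cons_le (a b : Bool) (t : List Bool) :
    (condense ((!a) :: b :: t)).length ≤ (condense (a :: t)).length + 1 := by
  obtain rfl | rfl : b = a ∨ b = !a := Bool.eq_or_eq_not b a
  · exact length_condense_cons_le (!b) (b :: t)
  · rw [condense_cons_self]
    exact length_condense_cons_le_length_condense_cons_add_one (!a) a t

theorem eq_and_eq_not_of_length_condense_lt {a b e : Bool} {t : List Bool}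
    (h : (condense ((!a) :: e :: t)).length < (condense ((!a) :: b :: e :: t)).length) :
    b = a ∧ e = !a := by
  obtain rfl | rfl : b = a ∨ b = !a := Bool.eq_or_eq_not b a
  · obtain rfl | rfl : e = b ∨ e = !b := Bool.eq_or_eq_not e b
    · simp [condense] at h
    · exact ⟨rfl, rfl⟩
  · simp [condense_cons_self] at h

end Condense

section Extend

variable {a b : Bool} {y : List Bool}

theorem eq_not_of_isChain_ne (hc : List.IsChain (· ≠ ·) (a :: b :: y)) : b = !a :=
  Bool.eq_not.mpr (List.isChain_cons_cons.mp hc).1.symm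

theorem extend_cons_cons (a b : Bool) (y : List Bool) :
    extend (a :: b :: y) = a :: extend (b :: y) := by
  simp [extend]

theorem extend_eq_cons_not_cons (hc : List.IsChain (· ≠ ·) (a :: y)) :
    extend (a :: y) = a :: (!a) :: a :: y := by
  induction y generalizing a with
  | nil => rfl
  | cons b y ih =>
    obtain rfl := eq_not_of_isChain_ne hc
    rw [extend_cons_cons, ih hc.tail, Bool.not_not]

end Extend

namespace Aligns

variable {a : Bool} {x y s t : List Bool} {c : ℕ}

theorem right_self (h : Aligns (a :: x) s c) : Aligns (a :: x) (a :: s) c := by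
  simpa [mismatch] using h.right a a

theorem diag_self (h : Aligns x s c) : Aligns (a :: x) (a :: s) c := by
  simpa [mismatch] using h.diag a a

theorem exists_eq_cons_right (h : Aligns x s c) : ∃ b t, s = b :: t := by
  cases h <;> exact ⟨_, _, rfl⟩

theorem exists_eq_not_cons (hc : List.IsChain (· ≠ ·) (a :: y)) (h : Aligns y s c) :
    ∃ z, y = (!a) :: z := by
  cases y with
  | nil => cases h
  | cons b z => exact ⟨z, by rw [eq_not_of_isChain_ne hc]⟩

theorem not_cons_right (hc : List.IsChain (· ≠ ·) (a :: y)) (h : Aligns y s c) :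
    Aligns y ((!a) :: s) c := by
  obtain ⟨z, rfl⟩ := h.exists_eq_not_cons hc
  exact h.right_self

theorem skip_or_insert (hc : List.IsChain (· ≠ ·) (a :: y))
    (hlen : 1 < (condense ((!a) :: t)).length) (h : Aligns (a :: y) ((!a) :: t) c) :
    (∃ c' ≤ c, Aligns y ((!a) :: t) c') ∨ ∃ c' < c, Aligns ((!a) :: a :: y) ((!a) :: t) c' := by
  induction t generalizing c with
  | nil => simp [condense] at hlen
  | cons b t ih =>
    cases h with
    | down _ _ h => exact .inl ⟨_, by omega, h⟩
    | diag _ _ h => exact .inl ⟨_, by omega, h.not_cons_right hc⟩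
    | @right _ _ _ _ c h =>
      have hcost : mismatch a (!a) = 1 := by simp [mismatch]
      obtain rfl | rfl : b = a ∨ b = !a := Bool.eq_or_eq_not b a
      · exact .inr ⟨c, by omega, h.diag_self⟩
      · rw [condense_cons_self] at hlen
        obtain ⟨c', hc', h'⟩ | ⟨c', hc', h'⟩ := ih hlen h
        · exact .inl ⟨c', by omega, h'.not_cons_right hc⟩
        · exact .inr ⟨c', by omega, h'.right_self⟩

/- Counting the blocks of `(!a) :: s` rather than of `s` makes the bound pass to shorter strings: an
initial block of `s` that differs from `a` is then not counted as progress. -/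
theorem exists_lt_extend {a : Bool} {y s : List Bool} {c : ℕ}
    (hc : List.IsChain (· ≠ ·) (a :: y))
    (hlen : (a :: y).length + 2 < (condense ((!a) :: s)).length) (h : Aligns (a :: y) s c) :
    ∃ c' < c, Aligns (extend (a :: y)) s c' := by
  cases h with
  | base a b =>
    have hblocks : (condense [!a, b]).length ≤ 2 := length_condense_not_cons_cons_le a b []
    simp only [List.length_cons, List.length_nil] at hlen
    omega
  | @down a b _ s c h =>
    obtain ⟨z, rfl⟩ := h.exists_eq_not_cons hc
    have hblocks := length_condense_cons_le_length_condense_cons_add_one (!a) a (b :: s)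
    obtain ⟨c', hlt, h'⟩ := exists_lt_extend hc.tail
      (by simp only [List.length_cons, Bool.not_not] at hlen ⊢; omega) h
    exact ⟨_, by omega, extend_cons_cons a _ _ ▸ h'.down a b⟩
  | @diag a b _ t c h =>
    obtain ⟨z, rfl⟩ := h.exists_eq_not_cons hc
    have hblocks := length_condense_not_cons_cons_le a b t
    obtain ⟨c', hlt, h'⟩ := exists_lt_extend hc.tail
      (by simp only [List.length_cons, Bool.not_not] at hlen ⊢; omega) h
    exact ⟨_, by omega, extend_cons_cons a _ _ ▸ h'.diag a b⟩
  | @right a b _ t c h =>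
    by_cases hskip : (condense ((!a) :: b :: t)).length ≤ (condense ((!a) :: t)).length
    · obtain ⟨c', hlt, h'⟩ := exists_lt_extend hc (hlen.trans_le hskip) h
      rw [extend_eq_cons_not_cons hc] at h' ⊢
      exact ⟨_, by omega, h'.right a b⟩
    · obtain ⟨e, u, rfl⟩ := h.exists_eq_cons_right
      obtain ⟨rfl, rfl⟩ := eq_and_eq_not_of_length_condense_lt (not_le.mp hskip)
      simp only [condense_cons_cons_of_ne (Bool.not_ne_self b),
        condense_cons_cons_of_ne (Bool.self_ne_not b), List.length_cons] at hlen
      obtain ⟨c', hle, h'⟩ | ⟨c', hlt, h'⟩ := h.skip_or_insert hc (by omega)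
      · obtain ⟨z, rfl⟩ := h'.exists_eq_not_cons hc
        have hblocks : z.length + 3 < (condense (b :: (!b) :: u)).length := by
          simp only [condense_cons_cons_of_ne (Bool.self_ne_not b), List.length_cons] at hlen ⊢
          omega
        obtain ⟨c'', hlt, h''⟩ := exists_lt_extend hc.tail (by rwa [Bool.not_not]) h'
        exact ⟨c'', by omega, extend_cons_cons b _ _ ▸ h''.diag_self⟩
      · exact ⟨c', by omega, extend_eq_cons_not_cons hc ▸ h'.diag_self⟩
termination_by y.length + s.length

end Aligns

theorem extend_decreases_dtwSq_general (x : List Bool) (hx : x ≠ [])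
    (hc : List.IsChain (· ≠ ·) x) (s : List Bool)
    (hlen : x.length + 2 < (condense ((!x.head hx) :: s)).length) :
    dtwSq (x ++ [!x.getLastD false, x.getLastD false]) s + 1 ≤ dtwSq x s := by
  have hs : s ≠ [] := by
    rintro rfl
    simp [condense] at hlen
  obtain ⟨a, y, rfl⟩ := List.exists_cons_of_ne_nil hx
  obtain ⟨_, hlt, halign⟩ := (aligns_dtwSq hx hs).exists_lt_extend hc hlen
  exact halign.dtwSq_le.trans_lt hlt

/-- extending a condensed string `x` of length `ℓ` by the two
symbols `1 - x[ℓ]`, `x[ℓ]` decreases the squared dtw distance to any string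
`s` with `|s̃| > ℓ + 2` by at least one. -/
theorem extend_decreases_dtwSq (x : List Bool) (hx : x ≠ [])
    (hc : List.Chain' (· ≠ ·) x) (s : List Bool) (hs : s ≠ [])
    (hlen : x.length + 2 < (condense s).length) :
    dtwSq (x ++ [!x.getLastD false, x.getLastD false]) s + 1 ≤ dtwSq x s := by
  exact extend_decreases_dtwSq_general x hx hc s
    (hlen.trans_le (length_condense_le_length_condense_cons _ s))
end

section
/- For the seven input strings 0, 0, 0, 101, 101, 010, 010, the string 0 is a mean with F(0) = 6, and every condensed mean equals 0. Since the median condensation length of these inputs is μ = 3, this shows the lower bound μ − 2 on the condensation length of a mean is tight. -/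
/-!
Every warping path visits every position of `x`, so if the symbol `a` does not occur in `y` then
`dtwSq x y` is at least the number of occurrences of `a` in `x`; for a one-letter `y` this is an
equality. On the other hand `101` and `010` are complementary: whatever the first and last symbols
of `z` are, each of them disagrees with one of the two strings, so
`dtwSq 101 z + dtwSq 010 z ≥ 2`. Hence `F z ≥ 3 * 1 + 2 * 2 = 7` as soon as `z` contains a `1`,
while `F z ≥ 2 * 2 + 2 * 1 = 6` otherwise, with equality for `z = 0`.
-/

theorem mem_of_isChain_le_add_one {a b k : ℕ} {l : List ℕ}
    (hl : List.IsChain (fun i j => j ≤ i + 1) (a :: l)) (hb : b ∈ a :: l) (hak : a ≤ k)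
    (hkb : k ≤ b) : k ∈ a :: l := by
  induction l generalizing a with
  | nil => simp_all; omega
  | cons c t ih =>
    obtain ⟨hc, ht⟩ := List.isChain_cons_cons.1 hl
    rcases hak.eq_or_lt with rfl | hlt
    · exact List.mem_cons_self
    · have hbt : b ∈ c :: t := (List.mem_cons.1 hb).resolve_left (by omega)
      exact List.mem_cons_of_mem _ (ih ht hbt (by omega))

theorem eq_singleton_of_isChain_ne {α : Type*} {a : α} {l : List α} (hl : l ≠ [])
    (hne : l.IsChain (· ≠ ·)) (ha : ∀ b ∈ l, b = a) : l = [a] := by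
  match l with
  | [b] => simp_all
  | b :: c :: t =>
    have hbc : b = c := (ha b (by simp)).trans (ha c (by simp)).symm
    exact absurd hbc (List.isChain_cons_cons.1 hne).1

theorem countP_range_getD {α : Type*} (P : α → Bool) (l : List α) (d : α) :
    (List.range l.length).countP (fun i => P (l.getD i d)) = l.countP P := by
  have hl : (List.range l.length).map (l.getD · d) = l :=
    List.ext_getElem (by simp) fun i _ hi => by simp [hi]
  conv_rhs => rw [← hl, List.countP_map]
  rfl

namespace IsWarpingPath

variable {m n : ℕ} {p : List (ℕ × ℕ)}

theorem isChain (h : IsWarpingPath m n p) : p.IsChain wpStep := h.2.2.1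

theorem start_mem (h : IsWarpingPath m n p) : (0, 0) ∈ p := List.mem_of_head? h.1

theorem finish_mem (h : IsWarpingPath m n p) : (m - 1, n - 1) ∈ p := List.mem_of_getLast? h.2.1

theorem swap (h : IsWarpingPath m n p) : IsWarpingPath n m (p.map Prod.swap) := by
  obtain ⟨hhead, hlast, hchain, hbound⟩ := h
  refine ⟨by simp [hhead], by simp [hlast], ?_, ?_⟩
  · refine List.isChain_map_of_isChain Prod.swap (fun a b hab => ?_) hchain
    simp only [wpStep, Prod.fst_swap, Prod.snd_swap] at hab ⊢
    omega
  · simp only [List.mem_map, forall_exists_index, and_imp]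
    rintro _ q hq rfl
    exact (hbound q hq).symm

theorem range_subset_map_fst (h : IsWarpingPath m n p) : List.range m ⊆ p.map Prod.fst := by
  intro i hi
  have hchain : (p.map Prod.fst).IsChain (fun i j => j ≤ i + 1) :=
    List.isChain_map_of_isChain Prod.fst (fun a b hab => by unfold wpStep at hab; omega) h.isChain
  have hlast : m - 1 ∈ p.map Prod.fst := List.mem_map_of_mem h.finish_mem
  have hhead : (p.map Prod.fst).head? = some 0 := by simp [h.1]
  obtain ⟨t, ht⟩ := List.head?_eq_some_iff.1 hhead
  rw [ht] at hchain hlast ⊢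
  exact mem_of_isChain_le_add_one hchain hlast i.zero_le
    (Nat.le_sub_one_of_lt (List.mem_range.1 hi))

theorem concat (h : IsWarpingPath (m + 1) (n + 1) p) :
    IsWarpingPath (m + 1) (n + 2) (p ++ [(m, n + 1)]) := by
  obtain ⟨hhead, hlast, hchain, hbound⟩ := h
  refine ⟨by simp [hhead], by simp, hchain.append (List.isChain_singleton _) ?_, ?_⟩
  · simp [hlast, wpStep]
  · intro q hq
    rcases List.mem_append.1 hq with hq | hq
    · have := hbound q hq
      omega
    · simp_all

end IsWarpingPath

theorem isWarpingPath_column {m : ℕ} (hm : m ≠ 0) :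
    IsWarpingPath m 1 ((List.range m).map (·, 0)) := by
  refine ⟨by simp [List.head?_range, hm], by simp [List.getLast?_range, hm], ?_, by simp⟩
  refine (List.isChain_map _).2 ((List.isChain_range _ m).2 ?_)
  simp [wpStep]

theorem exists_isWarpingPath {m n : ℕ} (hm : m ≠ 0) (hn : n ≠ 0) : ∃ p, IsWarpingPath m n p := by
  obtain ⟨m, rfl⟩ := Nat.exists_eq_succ_of_ne_zero hm
  obtain ⟨n, rfl⟩ := Nat.exists_eq_succ_of_ne_zero hn
  induction n with
  | zero => exact ⟨_, isWarpingPath_column hm⟩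
  | succ n ih =>
    obtain ⟨p, hp⟩ := ih n.succ_ne_zero
    exact ⟨_, hp.concat⟩

section Bounds

variable {x y : List Bool} {p : List (ℕ × ℕ)}

theorem pathCost_eq_countP (x y : List Bool) (p : List (ℕ × ℕ)) :
    pathCost x y p = p.countP (fun q => x.getD q.1 false != y.getD q.2 false) := by
  induction p with
  | nil => rfl
  | cons q t ih =>
    simp only [pathCost, List.map_cons, List.sum_cons, List.countP_cons] at ih ⊢
    rw [ih, add_comm]
    congr 1
    split_ifs <;> simp_all

theorem pathCost_map_swap (x y : List Bool) (p : List (ℕ × ℕ)) :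
    pathCost y x (p.map Prod.swap) = pathCost x y p := by
  simp [pathCost, Function.comp_def, eq_comm]

theorem count_le_pathCost {a : Bool} (ha : a ∉ y) (hp : IsWarpingPath x.length y.length p) :
    x.count a ≤ pathCost x y p := by
  have hrows : (List.range x.length).Subperm (p.map Prod.fst) :=
    List.nodup_range.subperm hp.range_subset_map_fst
  calc x.count a
      = (List.range x.length).countP (fun i => x.getD i false == a) :=
        (countP_range_getD (· == a) x false).symm
    _ ≤ (p.map Prod.fst).countP (fun i => x.getD i false == a) := hrows.countP_le _
    _ = p.countP (fun q => x.getD q.1 false == a) := List.countP_map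
    _ ≤ p.countP (fun q => x.getD q.1 false != y.getD q.2 false) := by
        refine List.countP_mono_left fun q hq hxa => ?_
        have hy : y.getD q.2 false ∈ y := by
          rw [List.getD_eq_getElem _ _ (hp.2.2.2 q hq).2]
          exact List.getElem_mem _
        rw [beq_iff_eq.1 hxa, bne_iff_ne]
        exact fun h => ha (h ▸ hy)
    _ = pathCost x y p := (pathCost_eq_countP x y p).symm

theorem countP_corners_le_pathCost (hx : 2 ≤ x.length) (hp : IsWarpingPath x.length y.length p) :
    [(0, 0), (x.length - 1, y.length - 1)].countP
      (fun q => x.getD q.1 false != y.getD q.2 false) ≤ pathCost x y p := by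
  have hnodup : [(0, 0), (x.length - 1, y.length - 1)].Nodup := by
    simp
    omega
  rw [pathCost_eq_countP]
  exact (hnodup.subperm (by simp [hp.start_mem, hp.finish_mem])).countP_le _

theorem dtwSq_le_pathCost (hp : IsWarpingPath x.length y.length p) :
    dtwSq x y ≤ pathCost x y p :=
  Nat.sInf_le ⟨p, hp, rfl⟩

theorem exists_pathCost_eq_dtwSq (hx : x ≠ []) (hy : y ≠ []) :
    ∃ p, IsWarpingPath x.length y.length p ∧ pathCost x y p = dtwSq x y := by
  obtain ⟨p, hp⟩ := exists_isWarpingPath (mt List.length_eq_zero_iff.1 hx)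
    (mt List.length_eq_zero_iff.1 hy)
  exact Nat.sInf_mem (s := {c | ∃ p, IsWarpingPath x.length y.length p ∧ pathCost x y p = c})
    ⟨_, p, hp, rfl⟩

theorem dtwSq_comm (x y : List Bool) : dtwSq x y = dtwSq y x := by
  have hsub (x y : List Bool) : {c | ∃ p, IsWarpingPath x.length y.length p ∧ pathCost x y p = c} ⊆
      {c | ∃ p, IsWarpingPath y.length x.length p ∧ pathCost y x p = c} := by
    rintro c ⟨p, hp, rfl⟩
    exact ⟨_, hp.swap, pathCost_map_swap x y p⟩
  exact congrArg sInf ((hsub x y).antisymm (hsub y x))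

theorem count_le_dtwSq {a : Bool} (hy : y ≠ []) (ha : a ∉ y) : x.count a ≤ dtwSq x y := by
  rcases eq_or_ne x [] with rfl | hx
  · simp
  obtain ⟨p, hp, hcost⟩ := exists_pathCost_eq_dtwSq hx hy
  exact hcost ▸ count_le_pathCost ha hp

theorem dtwSq_singleton_right (hx : x ≠ []) (a : Bool) : dtwSq x [a] = x.count (!a) := by
  refine le_antisymm ?_ (count_le_dtwSq (by simp) (by simp))
  calc dtwSq x [a]
      ≤ pathCost x [a] ((List.range x.length).map (·, 0)) :=
        dtwSq_le_pathCost (isWarpingPath_column (mt List.length_eq_zero_iff.1 hx))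
    _ = (List.range x.length).countP (fun i => x.getD i false != a) := by
        rw [pathCost_eq_countP, List.countP_map]
        rfl
    _ = x.countP (· != a) := countP_range_getD (· != a) x false
    _ = x.count (!a) := List.countP_congr fun b _ => by cases a <;> cases b <;> decide

theorem two_le_dtwSq_add_dtwSq_map_not (hx : 2 ≤ x.length) (hy : y ≠ []) :
    2 ≤ dtwSq x y + dtwSq (x.map not) y := by
  have hx₀ : x ≠ [] := List.ne_nil_of_length_pos (by omega)
  obtain ⟨p, hp, hcost⟩ := exists_pathCost_eq_dtwSq hx₀ hy
  obtain ⟨p', hp', hcost'⟩ := exists_pathCost_eq_dtwSq (x := x.map not) (by simpa using hx₀) hy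
  have hle := countP_corners_le_pathCost hx hp
  have hle' := countP_corners_le_pathCost (by simpa using hx) hp'
  have hnot {i : ℕ} (hi : i < x.length) : (x.map not).getD i false = !x.getD i false := by
    simp [hi]
  rw [← hcost, ← hcost']
  refine le_trans ?_ (add_le_add hle hle')
  simp only [List.length_map, List.countP_cons, List.countP_nil, hnot (i := 0) (by omega),
    hnot (i := x.length - 1) (by omega)]
  cases x.getD 0 false <;> cases x.getD (x.length - 1) false <;> cases y.getD 0 false <;>
    cases y.getD (y.length - 1) false <;> decide

end Bounds

/-- The input strings `0, 0, 0, 101, 101, 010, 010` of the tightness example, with `0` encoded as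
`false` and `1` as `true`. -/
def tightInputs : List (List Bool) :=
  [[false], [false], [false], [true, false, true], [true, false, true],
    [false, true, false], [false, true, false]]

section TightInputs

variable {z : List Bool}

theorem Fobj_tightInputs (hz : z ≠ []) : Fobj tightInputs z =
    3 * z.count true + 2 * (dtwSq [true, false, true] z + dtwSq [false, true, false] z) := by
  have h₀ : dtwSq [false] z = z.count true := by
    rw [dtwSq_comm, dtwSq_singleton_right hz, Bool.not_false]
  simp only [Fobj, tightInputs, List.map_cons, List.map_nil, List.sum_cons, List.sum_nil, h₀]
  ring

theorem Fobj_tightInputs_zero : Fobj tightInputs [false] = 6 := by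
  simp [Fobj_tightInputs, dtwSq_singleton_right]

theorem seven_le_Fobj_tightInputs (hz : true ∈ z) : 7 ≤ Fobj tightInputs z := by
  have hz₀ : z ≠ [] := List.ne_nil_of_mem hz
  have hcount : 0 < z.count true := List.count_pos_iff.2 hz
  have hcorners : 2 ≤ dtwSq [true, false, true] z + dtwSq [false, true, false] z :=
    two_le_dtwSq_add_dtwSq_map_not (by simp) hz₀
  rw [Fobj_tightInputs hz₀]
  omega

theorem six_le_Fobj_tightInputs (hz : z ≠ []) : 6 ≤ Fobj tightInputs z := by
  by_cases hmem : true ∈ z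
  · exact (Nat.le_succ 6).trans (seven_le_Fobj_tightInputs hmem)
  · have h101 : 2 ≤ dtwSq [true, false, true] z :=
      count_le_dtwSq (x := [true, false, true]) hz hmem
    have h010 : 1 ≤ dtwSq [false, true, false] z :=
      count_le_dtwSq (x := [false, true, false]) hz hmem
    rw [Fobj_tightInputs hz]
    omega

theorem isMean_tightInputs_zero : IsMean tightInputs [false] :=
  ⟨List.cons_ne_nil _ _, fun _ hw => Fobj_tightInputs_zero ▸ six_le_Fobj_tightInputs hw⟩

theorem true_notMem_of_isMean_tightInputs (hz : IsMean tightInputs z) : true ∉ z := by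
  intro hmem
  have hle : Fobj tightInputs z ≤ 6 :=
    Fobj_tightInputs_zero ▸ hz.2 [false] (List.cons_ne_nil _ _)
  exact absurd (seven_le_Fobj_tightInputs hmem) (by omega)

end TightInputs

/-- for the inputs `0, 0, 0, 101, 101, 010, 010` (encoded with
`0 = false`, `1 = true`), the string `0` is a mean with `F(0) = 6`, every
condensed mean equals `0`, and the median condensation length is `μ = 3`,
so the mean has condensation length exactly `μ - 2` (tightness of the lower
bound). -/
theorem mean_lower_bound_tight :
    let ss : List (List Bool) :=
      [[false], [false], [false], [true, false, true], [true, false, true],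
        [false, true, false], [false, true, false]]
    IsMean ss [false] ∧ Fobj ss [false] = 6 ∧
    (∀ z : List Bool, List.Chain' (· ≠ ·) z → IsMean ss z → z = [false]) ∧
    (ss.map fun s => (condense s).length).getD ((ss.length + 1) / 2 - 1) 0 = 3 ∧
    (condense [false]).length = 3 - 2 := by
  intro ss
  refine ⟨isMean_tightInputs_zero, Fobj_tightInputs_zero, fun z hz hmean => ?_,
    by simp [ss, condense], by simp [condense]⟩
  have hfalse : ∀ b ∈ z, b = false := fun b hb =>
    Bool.eq_false_of_not_eq_true fun h => true_notMem_of_isMean_tightInputs hmean (h ▸ hb)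
  exact eq_singleton_of_isChain_ne hmean.1 hz hfalse
end
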